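/- arXiv:2504.06814 — 4 statements merged into one kernel-verified Lean document; each statement's English description precedes it below -/
import Mathlib

section
/- Let (M, g) be a Hadamard manifold and let f : M → ℝ be a g-convex differentiable function. Then for any x ∈ M and any η > 0, a point y ∈ M solves the equation x = Exp_y(η grad f(y)) if and only if y is the minimizer over z ∈ M of the function z ↦ f(z) + (1/(2η)) d(x, z)². -/
open scoped RealInnerProductSpace

/-- An abstract Hadamard manifold: a metric space `M` together with tangent
spaces (real inner product spaces), exponential and logarithm (inverse
exponential) maps that are mutually inverse, such that the exponential map is a
radial isometry and satisfies the CAT(0) (non-positive curvature) comparison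
inequality. -/
structure Hadamard (M : Type*) [MetricSpace M] where
  /-- tangent space at each point -/
  T : M → Type*
  [normed : ∀ x, NormedAddCommGroup (T x)]
  [ips : ∀ x, InnerProductSpace ℝ (T x)]
  /-- exponential map at each point -/
  exp : (x : M) → T x → M
  /-- inverse exponential map at each point -/
  log : (x : M) → M → T x
  exp_log : ∀ x y, exp x (log x y) = y
  log_exp : ∀ x v, log x (exp x v) = v
  dist_eq : ∀ x y, dist x y = ‖log x y‖
  comparison : ∀ (x : M) (v w : T x), ‖v - w‖ ≤ dist (exp x v) (exp x w)

attribute [instance] Hadamard.normed Hadamard.ips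

/-- Quasilinearized inner product `⟨→xy, →zw⟩`. -/
noncomputable def qip {M : Type*} [MetricSpace M] (x y z w : M) : ℝ :=
  (dist x w ^ 2 + dist y z ^ 2 - dist x z ^ 2 - dist y w ^ 2) / 2

/-- `f` is differentiable with Riemannian gradient `G`: along every geodesic
`t ↦ Exp_x (t v)` the derivative at `t = 0` is `⟪G x, v⟫`. -/
def HasRGrad {M : Type*} [MetricSpace M] (H : Hadamard M) (f : M → ℝ)
    (G : (x : M) → H.T x) : Prop :=
  ∀ (x : M) (v : H.T x), HasDerivAt (fun t : ℝ => f (H.exp x (t • v))) ⟪G x, v⟫ 0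

/-- Geodesic convexity of `f` (with Riemannian gradient `G`). -/
def GConvex {M : Type*} [MetricSpace M] (H : Hadamard M) (f : M → ℝ)
    (G : (x : M) → H.T x) : Prop :=
  ∀ x y : M, f y + ⟪G y, H.log y x⟫ ≤ f x

/-- `μ`-strong geodesic convexity of `f` (with Riemannian gradient `G`). -/
def StronglyGConvex {M : Type*} [MetricSpace M] (H : Hadamard M) (f : M → ℝ)
    (G : (x : M) → H.T x) (μ : ℝ) : Prop :=
  ∀ x y : M, f y + ⟪G y, H.log y x⟫ + μ / 2 * dist x y ^ 2 ≤ f x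

/-- Geodesic `L`-smoothness of `f` (with Riemannian gradient `G`). -/
def GSmooth {M : Type*} [MetricSpace M] (H : Hadamard M) (f : M → ℝ)
    (G : (x : M) → H.T x) (L : ℝ) : Prop :=
  ∀ x y : M, f y ≤ f x + ⟪G x, H.log x y⟫ + L / 2 * dist x y ^ 2

/-! The lower bound `‖log_p q - log_p r‖ ≤ d(q, r)` turns the first-order identity
`η grad f(y) = log_y x` and convexity of `f` into minimality of `y`.

For the converse put `G = grad f(y)` and `u = log_y x`. Moving from `y` towards `x` gives
`‖u‖² ≤ η⟪G, u⟫`, so it suffices to show `η‖G‖² ≤ ⟪G, u⟫`, since then `‖ηG - u‖² ≤ 0`. Moving from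
`y` along `-G` would give this from an upper bound on the first variation of the distance, but
comparison only bounds distances from below. Convexity of `f` replaces the missing bound: from
`q = Exp_y(-tG)` go a fraction `t` of the way towards `x`. The point reached is close to `y` by the
CAT(0) inequality, so the tangent bound for `f` at `y` prevents `f` from being much smaller there
than at `y`, while convexity along the geodesic from `q` to `x` bounds it from above. This yields
`η‖G‖² ≤ f(x) - f(y) + d(x, y)² / 2`. As `y` is also the proximal point, with step `sη`, of the
point `Exp_y(su)`, the same inequality holds with `x`, `η` replaced by `Exp_y(su)`, `sη`, and
letting `s → 0` gives `η‖G‖² ≤ ⟪G, u⟫`. -/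

open Filter Set Topology

namespace Hadamard

variable {M : Type*} [MetricSpace M] (H : Hadamard M)

theorem dist_exp_right (p : M) (v : H.T p) : dist p (H.exp p v) = ‖v‖ := by
  rw [H.dist_eq, H.log_exp]

theorem exp_zero (p : M) : H.exp p 0 = p := by
  rw [← dist_eq_zero, dist_comm, dist_exp_right, norm_zero]

theorem norm_log_sub_log_le (p q r : M) : ‖H.log p q - H.log p r‖ ≤ dist q r := by
  simpa only [H.exp_log] using H.comparison p (H.log p q) (H.log p r)

theorem law_of_cosines_le (p q r : M) :
    dist p q ^ 2 - 2 * ⟪H.log p q, H.log p r⟫ + dist p r ^ 2 ≤ dist q r ^ 2 := by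
  rw [H.dist_eq p q, H.dist_eq p r, ← norm_sub_sq_real]
  gcongr
  exact H.norm_log_sub_log_le p q r

theorem dist_exp_exp_neg {p : M} {v w : H.T p} (h : SameRay ℝ v w) :
    dist (H.exp p v) (H.exp p (-w)) = ‖v‖ + ‖w‖ := by
  apply le_antisymm
  · simpa only [dist_exp_right, norm_neg] using
      dist_triangle_left (H.exp p v) (H.exp p (-w)) p
  · simpa only [sub_neg_eq_add, h.norm_add] using H.comparison p v (-w)

theorem log_eq_smul_log {p q r : M} {c : ℝ} (hpr : dist p r = c * dist p q)
    (hqr : dist q r = (c - 1) * dist p q) : H.log p r = c • H.log p q := by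
  rcases eq_or_ne p q with rfl | hpq
  · have log_eq_zero : ∀ z, dist p z = 0 → H.log p z = 0 := fun z hz => by
      rwa [← norm_eq_zero, ← H.dist_eq]
    rw [log_eq_zero r (by simpa using hpr), log_eq_zero p (dist_self p), smul_zero]
  have hray : SameRay ℝ (H.log p r) (H.log p q) := by
    rw [sameRay_iff_norm_sub]
    apply le_antisymm _ (abs_norm_sub_norm_le _ _)
    calc ‖H.log p r - H.log p q‖ ≤ dist r q := H.norm_log_sub_log_le p r q
      _ = ‖H.log p r‖ - ‖H.log p q‖ := by
        rw [dist_comm, ← H.dist_eq, ← H.dist_eq]; linarith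
      _ ≤ |‖H.log p r‖ - ‖H.log p q‖| := le_abs_self _
  have hsmul : dist p q • H.log p r = dist p q • c • H.log p q := by
    rw [smul_smul, mul_comm, ← hpr, H.dist_eq, H.dist_eq]
    exact hray.norm_smul_eq.symm
  exact smul_right_injective _ (dist_ne_zero.mpr hpq) hsmul

/-- The geodesic `t ↦ Exp_p (t log_p q)` from `p` (at `t = 0`) to `q` (at `t = 1`). -/
def geodesic (p q : M) (t : ℝ) : M :=
  H.exp p (t • H.log p q)

theorem dist_left_geodesic (p q : M) {t : ℝ} (ht : 0 ≤ t) :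
    dist p (H.geodesic p q t) = t * dist p q := by
  rw [geodesic, dist_exp_right, norm_smul, Real.norm_of_nonneg ht, ← H.dist_eq]

theorem log_geodesic_right (p q : M) {t : ℝ} (ht₀ : 0 < t) (ht₁ : t ≤ 1) :
    H.log (H.geodesic p q t) q = -(((1 - t) / t) • H.log (H.geodesic p q t) p) := by
  set m := H.geodesic p q t
  -- The geodesic leaving `m` in the direction opposite to `p` ends at `q`, since its endpoint has
  -- the same logarithm at `p` as `q`.
  set r := H.exp m (-(((1 - t) / t) • H.log m p)) with hr
  have hc : 0 ≤ (1 - t) / t := div_nonneg (sub_nonneg.mpr ht₁) ht₀.le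
  have hmr : dist m r = (t⁻¹ - 1) * dist p m := by
    rw [hr, dist_exp_right, norm_neg, norm_smul, Real.norm_of_nonneg hc, ← H.dist_eq, dist_comm m]
    field_simp
  have hpr : dist p r = t⁻¹ * dist p m := by
    have h := H.dist_exp_exp_neg (SameRay.sameRay_nonneg_smul_right (H.log m p) hc)
    rw [H.exp_log, norm_smul, Real.norm_of_nonneg hc, ← H.dist_eq, dist_comm m] at h
    rw [h]
    field_simp
    ring
  have hlog : H.log p r = H.log p q := by
    rw [H.log_eq_smul_log hpr hmr, show H.log p m = t • H.log p q from H.log_exp _ _,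
      inv_smul_smul₀ ht₀.ne']
  have hrq : r = q := by rw [← H.exp_log p r, hlog, H.exp_log]
  rw [← hrq, hr, H.log_exp]

theorem exists_velocity_geodesic (p q : M) {t : ℝ} (ht : t ∈ Icc 0 1) :
    ∃ E : H.T (H.geodesic p q t), ‖E‖ = dist p q ∧
      H.log (H.geodesic p q t) p = -(t • E) ∧ H.log (H.geodesic p q t) q = (1 - t) • E := by
  have hdist := H.dist_left_geodesic p q ht.1
  rcases ht.1.eq_or_lt with rfl | ht₀
  · have hp : p = H.geodesic p q 0 := by simpa using hdist
    refine ⟨H.log _ q, ?_, ?_, by simp⟩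
    · rw [← H.dist_eq, ← hp]
    · rw [zero_smul, neg_zero, ← norm_eq_zero, ← H.dist_eq, dist_comm, hdist, zero_mul]
  · refine ⟨-(t⁻¹ • H.log _ p), ?_, ?_, ?_⟩
    · rw [norm_neg, norm_smul, ← H.dist_eq, dist_comm, hdist, norm_inv,
        Real.norm_of_nonneg ht₀.le, inv_mul_cancel_left₀ ht₀.ne']
    · rw [smul_neg, neg_neg, smul_inv_smul₀ ht₀.ne']
    · rw [H.log_geodesic_right p q ht₀ ht.2, smul_neg, smul_smul, div_eq_mul_inv]

theorem dist_geodesic_right (p q : M) {t : ℝ} (ht : t ∈ Icc 0 1) :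
    dist (H.geodesic p q t) q = (1 - t) * dist p q := by
  obtain ⟨E, hE, -, hq⟩ := H.exists_velocity_geodesic p q ht
  rw [H.dist_eq, hq, norm_smul, hE, Real.norm_of_nonneg (sub_nonneg.mpr ht.2)]

theorem dist_geodesic_sq_le (p q r : M) {t : ℝ} (ht : t ∈ Icc 0 1) :
    dist r (H.geodesic p q t) ^ 2 ≤
      (1 - t) * dist r p ^ 2 + t * dist r q ^ 2 - t * (1 - t) * dist p q ^ 2 := by
  obtain ⟨E, -, hp, hq⟩ := H.exists_velocity_geodesic p q ht
  have hrp := H.law_of_cosines_le (H.geodesic p q t) r p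
  have hrq := H.law_of_cosines_le (H.geodesic p q t) r q
  rw [hp, inner_neg_right, inner_smul_right, dist_comm _ p, H.dist_left_geodesic p q ht.1,
    dist_comm _ r] at hrp
  rw [hq, inner_smul_right, H.dist_geodesic_right p q ht, dist_comm _ r] at hrq
  have ht₀ := ht.1
  have ht₁ := sub_nonneg.mpr ht.2
  linear_combination (1 - t) * hrp + t * hrq

end Hadamard

section Proximal

variable {M : Type*} [MetricSpace M] {H : Hadamard M} {f : M → ℝ} {G : (x : M) → H.T x}

theorem GConvex.map_geodesic_le (hconv : GConvex H f G) (p q : M) {t : ℝ} (ht : t ∈ Icc 0 1) :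
    f (H.geodesic p q t) ≤ (1 - t) * f p + t * f q := by
  obtain ⟨E, -, hp, hq⟩ := H.exists_velocity_geodesic p q ht
  have hfp := hconv p (H.geodesic p q t)
  have hfq := hconv q (H.geodesic p q t)
  rw [hp, inner_neg_right, inner_smul_right] at hfp
  rw [hq, inner_smul_right] at hfq
  have ht₀ := ht.1
  have ht₁ := sub_nonneg.mpr ht.2
  linear_combination (1 - t) * hfp + t * hfq

theorem HasRGrad.le_inner_of_mul_le (hf : HasRGrad H f G) (y : M) (v : H.T y) {φ : ℝ → ℝ}
    (hφ : ContinuousAt φ 0) (h : ∀ t ∈ Ioo (0 : ℝ) 1, t * φ t ≤ f (H.exp y (t • v)) - f y) :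
    φ 0 ≤ ⟪G y, v⟫ := by
  have hslope := (hf y v).tendsto_slope_zero_right
  simp only [zero_add, zero_smul, H.exp_zero, smul_eq_mul] at hslope
  refine le_of_tendsto_of_tendsto (hφ.tendsto.mono_left nhdsWithin_le_nhds) hslope ?_
  filter_upwards [Ioo_mem_nhdsGT one_pos] with t ht
  exact (le_inv_mul_iff₀ ht.1).mpr (h t ht)

/-- `y` is a proximal point of `f` at `x` with step size `η`, i.e. it minimizes
`z ↦ f z + d(x, z)² / (2η)`. -/
def IsProxPoint (f : M → ℝ) (η : ℝ) (x y : M) : Prop :=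
  ∀ z : M, f y + 1 / (2 * η) * dist x y ^ 2 ≤ f z + 1 / (2 * η) * dist x z ^ 2

theorem isProxPoint_iff {η : ℝ} (hη : 0 < η) {x y : M} :
    IsProxPoint f η x y ↔ ∀ z, dist x y ^ 2 + 2 * η * (f y - f z) ≤ dist x z ^ 2 := by
  refine forall_congr' fun z => ?_
  rw [← mul_le_mul_iff_of_pos_left (by positivity : 0 < 2 * η)]
  field_simp
  constructor <;> intro h <;> linarith

theorem GConvex.isProxPoint_exp (hconv : GConvex H f G) {η : ℝ} (hη : 0 < η) (y : M) :
    IsProxPoint f η (H.exp y (η • G y)) y := by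
  rw [isProxPoint_iff hη]
  intro z
  have hcos := H.law_of_cosines_le y (H.exp y (η • G y)) z
  rw [H.log_exp, real_inner_smul_left, dist_comm y] at hcos
  linear_combination hcos + 2 * η * hconv z y + sq_nonneg (dist y z)

namespace IsProxPoint

variable {η : ℝ} {x y : M}

theorem geodesic (hη : 0 < η) (hy : IsProxPoint f η x y) {s : ℝ} (hs : s ∈ Ioc 0 1) :
    IsProxPoint f (s * η) (H.geodesic y x s) y := by
  rw [isProxPoint_iff (mul_pos hs.1 hη)]
  rw [isProxPoint_iff hη] at hy
  intro z
  have htri : dist x z ≤ (1 - s) * dist x y + dist (H.geodesic y x s) z := by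
    have h := dist_triangle_left x z (H.geodesic y x s)
    rwa [H.dist_geodesic_right y x (Ioc_subset_Icc_self hs), dist_comm y] at h
  have hsq := (hy z).trans (pow_le_pow_left₀ dist_nonneg htri 2)
  rw [dist_comm _ y, H.dist_left_geodesic y x hs.1.le, dist_comm y]
  have hs₀ := hs.1
  have hs₁ := sub_nonneg.mpr hs.2
  linear_combination s * hsq +
    (1 - s) * sq_nonneg (dist (H.geodesic y x s) z - s * dist x y)

theorem dist_sq_le_mul_inner_grad (hη : 0 < η) (hf : HasRGrad H f G) (hy : IsProxPoint f η x y) :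
    dist x y ^ 2 ≤ η * ⟪G y, H.log y x⟫ := by
  rw [isProxPoint_iff hη] at hy
  have h := hf.le_inner_of_mul_le y (H.log y x) (φ := fun t => (2 - t) * dist x y ^ 2 / (2 * η))
    (by fun_prop) fun t ht => by
      have hmin := hy (H.geodesic y x t)
      rw [dist_comm x (H.geodesic y x t), H.dist_geodesic_right y x (Ioo_subset_Icc_self ht),
        dist_comm y, Hadamard.geodesic] at hmin
      rw [← mul_div_assoc, div_le_iff₀ (by positivity)]
      linear_combination hmin
  rw [div_le_iff₀ (by positivity)] at h
  linear_combination h / 2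

theorem mul_sub_exp_neg_grad_le (hη : 0 < η) (hconv : GConvex H f G) (hy : IsProxPoint f η x y)
    {t : ℝ} (ht : t ∈ Ioo 0 1) :
    2 * (1 + η) * (1 - t) * (f y - f (H.exp y (t • -G y))) ≤
      t * (2 * (f x - f y) + (2 - t) * ‖G y‖ ^ 2 + dist x y ^ 2) := by
  rw [isProxPoint_iff hη] at hy
  set q := H.exp y (t • -G y) with hq
  set m := H.geodesic q x t
  have ht₀ : 0 < t := ht.1
  have ht' := Ioo_subset_Icc_self ht
  have hfm : f y + ⟪G y, H.log y m⟫ ≤ (1 - t) * f q + t * f x :=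
    (hconv m y).trans (hconv.map_geodesic_le q x ht')
  have hyoung : 0 ≤ t ^ 2 * ‖G y‖ ^ 2 + 2 * t * ⟪G y, H.log y m⟫ + dist y m ^ 2 := by
    have h := norm_add_sq_real (t • G y) (H.log y m)
    rw [norm_smul, mul_pow, Real.norm_eq_abs, sq_abs, real_inner_smul_left, ← H.dist_eq] at h
    linear_combination sq_nonneg ‖t • G y + H.log y m‖ + h
  have hyq : dist y q = t * ‖G y‖ := by
    rw [hq, H.dist_exp_right, norm_smul, norm_neg, Real.norm_of_nonneg ht₀.le]
  have hcat := H.dist_geodesic_sq_le q x y ht'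
  rw [hyq, dist_comm y x, dist_comm q x] at hcat
  have hmin := mul_le_mul_of_nonneg_left (hy q) (mul_nonneg ht₀.le (sub_nonneg.mpr ht.2.le))
  refine le_of_mul_le_mul_left ?_ ht₀
  linear_combination 2 * t * hfm + hyoung + hcat + hmin

theorem mul_norm_grad_sq_le (hη : 0 < η) (hf : HasRGrad H f G) (hconv : GConvex H f G)
    (hy : IsProxPoint f η x y) : η * ‖G y‖ ^ 2 ≤ f x - f y + dist x y ^ 2 / 2 := by
  have h := hf.le_inner_of_mul_le y (-G y)
    (φ := fun t => -(2 * (f x - f y) + (2 - t) * ‖G y‖ ^ 2 + dist x y ^ 2) /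
      (2 * (1 + η) * (1 - t)))
    (ContinuousAt.div (by fun_prop) (by fun_prop) (by rw [sub_zero]; positivity)) fun t ht => by
      have hpos : 0 < 1 - t := sub_pos.mpr ht.2
      rw [← mul_div_assoc, div_le_iff₀ (by positivity)]
      linear_combination hy.mul_sub_exp_neg_grad_le hη hconv ht
  rw [inner_neg_right, real_inner_self_eq_norm_sq, sub_zero, sub_zero, mul_one,
    div_le_iff₀ (by positivity)] at h
  linear_combination h / 2

theorem mul_norm_grad_sq_le_inner (hη : 0 < η) (hf : HasRGrad H f G) (hconv : GConvex H f G)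
    (hy : IsProxPoint f η x y) : η * ‖G y‖ ^ 2 ≤ ⟪G y, H.log y x⟫ := by
  have h := hf.le_inner_of_mul_le y (H.log y x) (φ := fun s => η * ‖G y‖ ^ 2 - s * dist x y ^ 2 / 2)
    (by fun_prop) fun s hs => by
      have hs' := (hy.geodesic (H := H) hη (Ioo_subset_Ioc_self hs)).mul_norm_grad_sq_le
        (mul_pos hs.1 hη) hf hconv
      rw [dist_comm _ y, H.dist_left_geodesic y x hs.1.le, dist_comm y, Hadamard.geodesic] at hs'
      linear_combination hs'
  simpa using h

theorem log_eq_smul_grad (hη : 0 < η) (hf : HasRGrad H f G) (hconv : GConvex H f G)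
    (hy : IsProxPoint f η x y) : H.log y x = η • G y := by
  have hlog := hy.dist_sq_le_mul_inner_grad hη hf
  have hgrad := hy.mul_norm_grad_sq_le_inner hη hf hconv
  have hsub : ‖H.log y x - η • G y‖ ^ 2 ≤ 0 := by
    rw [norm_sub_sq_real, real_inner_smul_right, norm_smul, Real.norm_of_nonneg hη.le,
      real_inner_comm, ← H.dist_eq, dist_comm y]
    linear_combination hlog + η * hgrad
  rwa [sq_nonpos_iff, norm_eq_zero, sub_eq_zero] at hsub

end IsProxPoint

end Proximal

/-- Proposition: characterization of the proximal operator.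
For `g`-convex differentiable `f`, any `x ∈ M` and `η > 0`, `y` solves
`x = Exp_y (η grad f y)` iff `y` minimizes `z ↦ f z + (1/(2η)) d(x,z)²`. -/
theorem proximal_characterization
    {M : Type*} [MetricSpace M] (H : Hadamard M) (f : M → ℝ) (G : (x : M) → H.T x)
    (hf : HasRGrad H f G) (hconv : GConvex H f G)
    (x : M) (η : ℝ) (hη : 0 < η) (y : M) :
    H.exp y (η • G y) = x ↔
      ∀ z : M, f y + 1 / (2 * η) * dist x y ^ 2 ≤ f z + 1 / (2 * η) * dist x z ^ 2 := by
  constructor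
  · rintro rfl
    exact hconv.isProxPoint_exp hη y
  · intro (hy : IsProxPoint f η x y)
    rw [← hy.log_eq_smul_grad hη hf hconv, H.exp_log]
end

section
/- Let (M, g) be a Hadamard manifold and let f : M → ℝ be a g-convex differentiable function with a minimizer x* ∈ M. Let η > 0 and let {x_t} be a sequence in M generated by the proximal gradient iteration: for each t, x_{t+1} solves x_t = Exp_{x_{t+1}}(η grad f(x_{t+1})). Then for every t ≥ 1, f(x_t) − f(x*) ≤ d(x_0, x*)²/(η t). -/
/-!
The comparison inequality is the law of cosines `‖v‖² + d(y, z)² - 2⟪v, log_y z⟫ ≤ d(exp_y v, z)²`.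
For a step `x = exp_y (η g)` and a subgradient `g` at `y`, taking `v = η g` bounds the inner product
by `η (f z - f y)`, so `2 η (f y - f z)` is at most the decrease of the squared distance to `z`.
These bounds telescope along the iteration, and since `f` decreases along it, the last iterate
inherits the rate of the weighted average.
-/

open scoped RealInnerProductSpace

namespace Hadamard

variable {M : Type*} [MetricSpace M] (H : Hadamard M)

/-- `g` is a subgradient of `f` at `y`: the function `f` lies above its first-order model
`z ↦ f y + ⟪g, log_y z⟫`. -/
def IsSubgradientAt (f : M → ℝ) (y : M) (g : H.T y) : Prop :=
  ∀ z, f y + ⟪g, H.log y z⟫ ≤ f z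

/-- `y` results from `x` by a proximal (implicit subgradient) step of size `η` for `f`. The
subgradient is taken at the new point `y`, so the step is expressed as going back from `y`
to `x`. -/
def IsProximalStep (f : M → ℝ) (η : ℝ) (x y : M) : Prop :=
  ∃ g : H.T y, H.IsSubgradientAt f y g ∧ H.exp y (η • g) = x

theorem norm_sq_add_dist_sq_sub_le_dist_exp_sq (y z : M) (v : H.T y) :
    ‖v‖ ^ 2 + dist y z ^ 2 - 2 * ⟪v, H.log y z⟫ ≤ dist (H.exp y v) z ^ 2 := by
  calc ‖v‖ ^ 2 + dist y z ^ 2 - 2 * ⟪v, H.log y z⟫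
      = ‖v - H.log y z‖ ^ 2 := by rw [norm_sub_sq_real, H.dist_eq]; ring
    _ ≤ dist (H.exp y v) (H.exp y (H.log y z)) ^ 2 := by gcongr; exact H.comparison y v _
    _ = dist (H.exp y v) z ^ 2 := by rw [H.exp_log]

variable {H} {f : M → ℝ}

namespace IsProximalStep

variable {η : ℝ} {x y : M}

theorem apply_le (h : H.IsProximalStep f η x y) (hη : 0 ≤ η) : f y ≤ f x := by
  obtain ⟨g, hg, rfl⟩ := h
  calc f y ≤ f y + η * ⟪g, g⟫ := le_add_of_nonneg_right (mul_nonneg hη real_inner_self_nonneg)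
    _ = f y + ⟪g, H.log y (H.exp y (η • g))⟫ := by rw [H.log_exp, real_inner_smul_right]
    _ ≤ f (H.exp y (η • g)) := hg _

theorem two_mul_sub_add_dist_sq_le (h : H.IsProximalStep f η x y) (hη : 0 ≤ η) (z : M) :
    2 * η * (f y - f z) + dist y z ^ 2 ≤ dist x z ^ 2 := by
  obtain ⟨g, hg, rfl⟩ := h
  have cosine_law : ‖η • g‖ ^ 2 + dist y z ^ 2 - 2 * (η * ⟪g, H.log y z⟫) ≤
      dist (H.exp y (η • g)) z ^ 2 := by
    simpa only [real_inner_smul_left] using H.norm_sq_add_dist_sq_sub_le_dist_exp_sq y z (η • g)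
  have subgradient_bound : η * (f y + ⟪g, H.log y z⟫) ≤ η * f z :=
    mul_le_mul_of_nonneg_left (hg z) hη
  linarith [sq_nonneg ‖η • g‖]

end IsProximalStep

theorem two_mul_sum_mul_sub_add_dist_sq_le {η : ℕ → ℝ} {x : ℕ → M} (hη : ∀ t, 0 ≤ η t)
    (hx : ∀ t, H.IsProximalStep f (η t) (x t) (x (t + 1))) (z : M) (t : ℕ) :
    2 * (∑ s ∈ Finset.range t, η s) * (f (x t) - f z) + dist (x t) z ^ 2 ≤ dist (x 0) z ^ 2 := by
  induction t with
  | zero => simp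
  | succ t ih =>
    have hsum : 0 ≤ ∑ s ∈ Finset.range t, η s := Finset.sum_nonneg fun s _ ↦ hη s
    have descent : (∑ s ∈ Finset.range t, η s) * f (x (t + 1)) ≤
        (∑ s ∈ Finset.range t, η s) * f (x t) :=
      mul_le_mul_of_nonneg_left ((hx t).apply_le (hη t)) hsum
    have step := (hx t).two_mul_sub_add_dist_sq_le (hη t) z
    rw [Finset.sum_range_succ]
    linarith

end Hadamard

theorem GConvex.isProximalStep {M : Type*} [MetricSpace M] {H : Hadamard M} {f : M → ℝ}
    {G : (x : M) → H.T x} (hf : GConvex H f G) {η : ℝ} {x y : M} (h : H.exp y (η • G y) = x) :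
    H.IsProximalStep f η x y :=
  ⟨G y, fun z ↦ hf z y, h⟩

theorem proximal_gradient_convergence_general {M : Type*} [MetricSpace M] {H : Hadamard M}
    {f : M → ℝ} {η : ℕ → ℝ} {x : ℕ → M} (hη : ∀ t, 0 ≤ η t)
    (hx : ∀ t, H.IsProximalStep f (η t) (x t) (x (t + 1))) (z : M) {t : ℕ}
    (ht : 0 < ∑ s ∈ Finset.range t, η s) :
    f (x t) - f z ≤ dist (x 0) z ^ 2 / (2 * ∑ s ∈ Finset.range t, η s) := by
  rw [le_div_iff₀' (by positivity)]
  linarith [Hadamard.two_mul_sum_mul_sub_add_dist_sq_le hη hx z t, sq_nonneg (dist (x t) z)]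

/-- Theorem: convergence of the proximal gradient method.
If `f` is `g`-convex with minimizer `x*` and `x_{t+1}` solves
`x_t = Exp_{x_{t+1}} (η grad f (x_{t+1}))`, then for every `t ≥ 1`,
`f(x_t) − f(x*) ≤ d(x_0, x*)² / (η t)`. -/
theorem proximal_gradient_convergence
    {M : Type*} [MetricSpace M] (H : Hadamard M) (f : M → ℝ) (G : (x : M) → H.T x)
    (hf : HasRGrad H f G) (hconv : GConvex H f G)
    (xstar : M) (hmin : ∀ z : M, f xstar ≤ f z)
    (η : ℝ) (hη : 0 < η) (x : ℕ → M)
    (hiter : ∀ t : ℕ, H.exp (x (t + 1)) (η • G (x (t + 1))) = x t) :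
    ∀ t : ℕ, 1 ≤ t → f (x t) - f xstar ≤ dist (x 0) xstar ^ 2 / (η * t) := by
  intro t ht
  have hηt : 0 < η * t := by positivity
  calc f (x t) - f xstar ≤ dist (x 0) xstar ^ 2 / (2 * (η * t)) := by
        simpa [mul_comm η] using proximal_gradient_convergence_general (fun _ ↦ hη.le)
          (fun s ↦ hconv.isProximalStep (hiter s)) xstar (by simpa [mul_comm η] using hηt)
    _ ≤ dist (x 0) xstar ^ 2 / (η * t) :=
        div_le_div_of_nonneg_left (sq_nonneg _) hηt (by linarith)
end

section
/- Let (M, g) be a Hadamard manifold, let {f_t}_{t≥0} be a sequence of g-convex differentiable functions on M, let {η_t}_{t≥0} be positive step sizes, and let {x_t} be generated by: for each t, x_{t+1} solves x_t = Exp_{x_{t+1}}(η_t grad f_t(x_{t+1})). Then for every z ∈ M and every T ≥ 1, Σ_{t=0}^{T−1} η_t (f_t(x_t) − f_t(z)) ≤ (1/2) d(x_0, z)² + Σ_{t=0}^{T−1} (η_t²/2) ‖grad f_t(x_t)‖_{x_t}². -/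
open scoped RealInnerProductSpace

/-!
The proximal point `y = x_{t+1}` sees `x = x_t` in the direction `log_y x = η grad f(y)`. Convexity
at `y` combined with the CAT(0) law of cosines at `y` gives the three-point inequality
`η (f y - f z) ≤ (d(x, z)² - d(y, z)² - d(y, x)²) / 2`. To evaluate `f` at `x` instead of `y`, one
pays `η (f x - f y) ≤ η ‖grad f(x)‖ d(y, x)`, and by AM-GM the spare `d(y, x)² / 2` absorbs this up
to `η² ‖grad f(x)‖² / 2`. The remaining distances telescope.
-/

theorem Hadamard.dist_sq_add_dist_sq_sub_two_mul_inner_log_le {M : Type*} [MetricSpace M]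
    (H : Hadamard M) (x y z : M) :
    dist x y ^ 2 + dist x z ^ 2 - 2 * ⟪H.log x y, H.log x z⟫ ≤ dist y z ^ 2 := by
  have hcat : ‖H.log x y - H.log x z‖ ≤ dist y z := by
    simpa only [H.exp_log] using H.comparison x (H.log x y) (H.log x z)
  calc dist x y ^ 2 + dist x z ^ 2 - 2 * ⟪H.log x y, H.log x z⟫
      = ‖H.log x y - H.log x z‖ ^ 2 := by
        rw [norm_sub_sq_real, H.dist_eq, H.dist_eq]
        ring
    _ ≤ dist y z ^ 2 := by gcongr

namespace GConvex

variable {M : Type*} [MetricSpace M] {H : Hadamard M} {f : M → ℝ} {G : (x : M) → H.T x}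

theorem sub_le_norm_mul_dist (hf : GConvex H f G) (x y : M) :
    f x - f y ≤ ‖G x‖ * dist x y :=
  calc f x - f y ≤ -⟪G x, H.log x y⟫ := by linarith [hf y x]
    _ ≤ ‖G x‖ * ‖H.log x y‖ :=
      (neg_le_abs _).trans (abs_real_inner_le_norm _ _)
    _ = ‖G x‖ * dist x y := by rw [H.dist_eq]

theorem proximal_three_point (hf : GConvex H f G) {η : ℝ} (hη : 0 ≤ η) {x y : M}
    (hstep : H.exp y (η • G y) = x) (z : M) :
    η * (f y - f z) ≤
      1 / 2 * dist x z ^ 2 - 1 / 2 * dist y z ^ 2 - 1 / 2 * dist y x ^ 2 := by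
  have hlog : H.log y x = η • G y := by rw [← hstep, H.log_exp]
  have hcos : dist y x ^ 2 + dist y z ^ 2 - 2 * (η * ⟪G y, H.log y z⟫) ≤ dist x z ^ 2 := by
    simpa only [hlog, real_inner_smul_left]
      using H.dist_sq_add_dist_sq_sub_two_mul_inner_log_le y x z
  have hconv : η * (f y - f z) ≤ η * -⟪G y, H.log y z⟫ := by
    gcongr
    linarith [hf z y]
  linarith

theorem proximal_step_bound (hf : GConvex H f G) {η : ℝ} (hη : 0 ≤ η) {x y : M}
    (hstep : H.exp y (η • G y) = x) (z : M) :
    η * (f x - f z) ≤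
      1 / 2 * dist x z ^ 2 - 1 / 2 * dist y z ^ 2 + η ^ 2 / 2 * ‖G x‖ ^ 2 := by
  have hmove : η * (f x - f y) ≤ η ^ 2 / 2 * ‖G x‖ ^ 2 + 1 / 2 * dist y x ^ 2 :=
    calc η * (f x - f y) ≤ η * (‖G x‖ * dist y x) := by
          rw [dist_comm]
          gcongr
          exact hf.sub_le_norm_mul_dist x y
      _ ≤ η ^ 2 / 2 * ‖G x‖ ^ 2 + 1 / 2 * dist y x ^ 2 := by
          linarith [two_mul_le_add_sq (η * ‖G x‖) (dist y x)]
  linarith [hf.proximal_three_point hη hstep z]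

end GConvex

/-- telescoped regret-type bound for proximal iterations with
varying `g`-convex objectives `f_t` and positive step sizes `η_t`:
`Σ_{t=0}^{T−1} η_t (f_t(x_t) − f_t(z)) ≤ (1/2) d(x_0,z)² + Σ_{t=0}^{T−1} (η_t²/2) ‖grad f_t(x_t)‖²`. -/
theorem proximal_telescoped_bound
    {M : Type*} [MetricSpace M] (H : Hadamard M)
    (f : ℕ → M → ℝ) (G : (t : ℕ) → (x : M) → H.T x)
    (hf : ∀ t, HasRGrad H (f t) (G t)) (hconv : ∀ t, GConvex H (f t) (G t))
    (η : ℕ → ℝ) (hη : ∀ t, 0 < η t) (x : ℕ → M)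
    (hiter : ∀ t : ℕ, H.exp (x (t + 1)) (η t • G t (x (t + 1))) = x t) :
    ∀ (z : M) (T : ℕ), 1 ≤ T →
      ∑ t ∈ Finset.range T, η t * (f t (x t) - f t z) ≤
        1 / 2 * dist (x 0) z ^ 2 +
          ∑ t ∈ Finset.range T, η t ^ 2 / 2 * ‖G t (x t)‖ ^ 2 := by
  intro z T _
  calc ∑ t ∈ Finset.range T, η t * (f t (x t) - f t z)
      ≤ ∑ t ∈ Finset.range T, ((1 / 2 * dist (x t) z ^ 2 - 1 / 2 * dist (x (t + 1)) z ^ 2) +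
          η t ^ 2 / 2 * ‖G t (x t)‖ ^ 2) :=
        Finset.sum_le_sum fun t _ => (hconv t).proximal_step_bound (hη t).le (hiter t) z
    _ = (1 / 2 * dist (x 0) z ^ 2 - 1 / 2 * dist (x T) z ^ 2) +
          ∑ t ∈ Finset.range T, η t ^ 2 / 2 * ‖G t (x t)‖ ^ 2 := by
        rw [Finset.sum_add_distrib, Finset.sum_range_sub' fun t => 1 / 2 * dist (x t) z ^ 2]
    _ ≤ 1 / 2 * dist (x 0) z ^ 2 + ∑ t ∈ Finset.range T, η t ^ 2 / 2 * ‖G t (x t)‖ ^ 2 := by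
        gcongr
        exact sub_le_self _ (by positivity)
end

section
/- Let (M, g) be a Hadamard manifold and let f : M → ℝ be continuously differentiable and μ-strongly g-convex with unique minimizer z* ∈ M. Fix a starting point z_0 ∈ M and define the sublevel-type sets D := {z ∈ M : d(z, z_0) ≤ √((2/μ)(f(z_0) − f(z*)))} and D_0 := {z ∈ M : d(z, z_0) ≤ √((2/μ)(f(z_0) − f(z*))) + (1/μ) max_{z ∈ D} ‖grad f(z)‖_z}. Suppose L_0 ≥ μ is a constant such that f is geodesically L_0-smooth on D_0 and ‖grad f(z)‖_z ≤ L_0 for all z ∈ D_0. Then the gradient descent iterates z_{t+1} = Exp_{z_t}(−(1/L_0) grad f(z_t)) remain in D_0 and satisfy f(z_t) − f(z*) ≤ (1 − μ/(4L_0))^t (f(z_0) − f(z*)) for all t ≥ 0. -/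
/-!
By the triangle inequality through the minimizer, strong convexity keeps the whole sublevel set
`{f ≤ f z₀}` inside `D₀`, so `f` is smooth there. A gradient step cannot leave that sublevel set:
shrink its step size continuously from `η` to `0`. If the full step ended at or above its starting
value, then, as `f` decreases initially, some shorter step would return exactly to that value;
but this shorter step stays in the sublevel set, where smoothness forces a strict decrease. Every
step therefore decreases `f` by a multiple of `‖grad f‖²`, and the Polyak–Łojasiewicz inequality
turns this into a contraction of `f - f z*`.
-/

open scoped RealInnerProductSpace

open scoped Topology

theorem lt_of_hasDerivWithinAt_neg_of_forall_ne {φ : ℝ → ℝ} {φ' a b : ℝ} (hab : a < b)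
    (hcont : ContinuousOn φ (Set.Icc a b)) (hderiv : HasDerivWithinAt φ φ' (Set.Ioi a) a)
    (hneg : φ' < 0) (hne : ∀ s ∈ Set.Ioc a b, φ s ≠ φ a) : φ b < φ a := by
  by_contra! hb
  have hdecr : ∀ᶠ s in 𝓝[>] a, φ s < φ a := by
    filter_upwards [hderiv.limsup_slope_le' (lt_irrefl a) hneg, self_mem_nhdsWithin]
      with s hslope hs
    rw [slope_def_field, div_lt_iff₀ (sub_pos.2 hs)] at hslope
    linarith
  obtain ⟨s, hsa, hs⟩ := (hdecr.and (Ioo_mem_nhdsGT hab)).exists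
  obtain ⟨r, hr, hra⟩ := intermediate_value_Icc hs.2.le
    (hcont.mono (Set.Icc_subset_Icc_left hs.1.le)) ⟨hsa.le, hb⟩
  exact hne r ⟨hs.1.trans_le hr.1, hr.2⟩ hra

/-- Geodesic `L`-smoothness of `f` (with Riemannian gradient `G`) between points of `S`: the local
form of `GSmooth`. As `S` need not be geodesically convex, nothing is said about the geodesic
joining two points of `S`. -/
def GSmoothOn {M : Type*} [MetricSpace M] (H : Hadamard M) (f : M → ℝ) (G : (x : M) → H.T x)
    (L : ℝ) (S : Set M) : Prop :=
  ∀ x ∈ S, ∀ y ∈ S, f y ≤ f x + ⟪G x, H.log x y⟫ + L / 2 * dist x y ^ 2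

/-- The gradient descent step `Exp_x (-η grad f(x))` of step size `η`, for a vector field `G` in
the role of `grad f`. -/
def gradStep {M : Type*} [MetricSpace M] (H : Hadamard M) (G : (x : M) → H.T x) (η : ℝ) (x : M) :
    M :=
  H.exp x ((-η) • G x)

section

variable {M : Type*} [MetricSpace M] {H : Hadamard M} {f : M → ℝ} {G : (x : M) → H.T x}
  {μ L η : ℝ} {x y z : M}

theorem Hadamard.exp_zero_s15 (H : Hadamard M) (x : M) : H.exp x 0 = x := by
  have h := H.dist_eq x (H.exp x 0)
  rw [H.log_exp, norm_zero] at h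
  exact (dist_eq_zero.1 h).symm

theorem gradStep_zero : gradStep H G 0 x = x := by
  simp [gradStep, H.exp_zero_s15]

theorem gradStep_of_eq_zero (h : G x = 0) : gradStep H G η x = x := by
  simp [gradStep, h, H.exp_zero_s15]

theorem HasRGrad.hasDerivAt_gradStep (hf : HasRGrad H f G) (x : M) :
    HasDerivAt (fun η => f (gradStep H G η x)) (-‖G x‖ ^ 2) 0 := by
  simpa [gradStep] using hf x (-G x)

theorem HasRGrad.eq_zero_of_forall_le (hf : HasRGrad H f G) (hmin : ∀ z, f x ≤ f z) :
    G x = 0 := by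
  have hlocal : IsLocalMin (fun η => f (gradStep H G η x)) 0 :=
    Filter.Eventually.of_forall fun η => by simpa only [gradStep_zero] using hmin _
  simpa using hlocal.hasDerivAt_eq_zero (hf.hasDerivAt_gradStep x)

theorem StronglyGConvex.polyak_lojasiewicz (hsc : StronglyGConvex H f G μ) (hμ : 0 ≤ μ)
    (x y : M) : 2 * μ * (f x - f y) ≤ ‖G x‖ ^ 2 := by
  have hconv := hsc y x
  rw [dist_comm, H.dist_eq] at hconv
  have hsq : 0 ≤ ‖G x‖ ^ 2 + 2 * (μ * ⟪G x, H.log x y⟫) + (μ * ‖H.log x y‖) ^ 2 := by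
    simpa [norm_add_sq_real, inner_smul_right, norm_smul, abs_of_nonneg hμ] using
      sq_nonneg ‖G x + μ • H.log x y‖
  nlinarith

theorem StronglyGConvex.sqrt_le_norm (hsc : StronglyGConvex H f G μ) (hμ : 0 < μ) (x y : M) :
    √(2 / μ * (f x - f y)) ≤ 1 / μ * ‖G x‖ := by
  refine Real.sqrt_le_iff.2 ⟨by positivity, ?_⟩
  calc 2 / μ * (f x - f y) = (1 / μ) ^ 2 * (2 * μ * (f x - f y)) := by field_simp
    _ ≤ (1 / μ) ^ 2 * ‖G x‖ ^ 2 := by gcongr; exact hsc.polyak_lojasiewicz hμ.le x y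
    _ = (1 / μ * ‖G x‖) ^ 2 := (mul_pow _ _ _).symm

theorem StronglyGConvex.dist_le_sqrt (hsc : StronglyGConvex H f G μ) (hμ : 0 < μ)
    (hy : G y = 0) (x : M) : dist x y ≤ √(2 / μ * (f x - f y)) := by
  have hgrowth : f y + μ / 2 * dist x y ^ 2 ≤ f x := by simpa [hy] using hsc x y
  apply Real.le_sqrt_of_sq_le
  rw [div_mul_eq_mul_div, le_div_iff₀ hμ]
  linarith

theorem StronglyGConvex.dist_le_of_le (hsc : StronglyGConvex H f G μ) (hμ : 0 < μ)
    (hy : G y = 0) (hzx : f z ≤ f x) :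
    dist z x ≤ √(2 / μ * (f x - f y)) + 1 / μ * ‖G x‖ :=
  calc dist z x ≤ dist z y + dist x y := dist_triangle_right z x y
    _ ≤ √(2 / μ * (f z - f y)) + √(2 / μ * (f x - f y)) :=
      add_le_add (hsc.dist_le_sqrt hμ hy z) (hsc.dist_le_sqrt hμ hy x)
    _ ≤ √(2 / μ * (f x - f y)) + 1 / μ * ‖G x‖ := by
      gcongr
      exact hsc.sqrt_le_norm hμ x y

theorem GSmoothOn.mono {S T : Set M} (hT : GSmoothOn H f G L T) (hST : S ⊆ T) :
    GSmoothOn H f G L S :=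
  fun x hx y hy => hT x (hST hx) y (hST hy)

theorem GSmoothOn.apply_gradStep_le {S : Set M} (hS : GSmoothOn H f G L S) (hx : x ∈ S)
    (hstep : gradStep H G η x ∈ S) :
    f (gradStep H G η x) ≤ f x - η * (1 - L * η / 2) * ‖G x‖ ^ 2 := by
  have h := hS x hx _ hstep
  rw [H.dist_eq, gradStep, H.log_exp, inner_smul_right, real_inner_self_eq_norm_sq, norm_smul,
    mul_pow, Real.norm_eq_abs, sq_abs] at h
  rw [gradStep]
  linarith

theorem GSmoothOn.apply_gradStep_le_self (hS : GSmoothOn H f G L {z | f z ≤ f x})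
    (hf : HasRGrad H f G) (hcont : ContinuousOn (fun s => f (gradStep H G s x)) (Set.Icc 0 η))
    (hL : 0 ≤ L) (hη : 0 < η) (hLη : L * η < 2) : f (gradStep H G η x) ≤ f x := by
  rcases eq_or_ne (G x) 0 with hG | hG
  · rw [gradStep_of_eq_zero hG]
  have hnorm : 0 < ‖G x‖ ^ 2 := by positivity
  have hne : ∀ s ∈ Set.Ioc 0 η, f (gradStep H G s x) ≠ f (gradStep H G 0 x) := by
    rintro s ⟨hs, hsη⟩ hreturn
    rw [gradStep_zero] at hreturn
    have hLs : L * s < 2 := (mul_le_mul_of_nonneg_left hsη hL).trans_lt hLη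
    have hdecr : 0 < s * (1 - L * s / 2) * ‖G x‖ ^ 2 :=
      mul_pos (mul_pos hs (by linarith)) hnorm
    have := hS.apply_gradStep_le (le_refl (f x)) hreturn.le
    linarith
  simpa only [gradStep_zero] using (lt_of_hasDerivWithinAt_neg_of_forall_ne hη hcont
    (hf.hasDerivAt_gradStep x).hasDerivWithinAt (neg_neg_of_pos hnorm) hne).le

theorem GSmoothOn.apply_gradStep_sub_le {S : Set M} (hS : GSmoothOn H f G L S)
    (hsc : StronglyGConvex H f G μ) (hμ : 0 ≤ μ) (hη : 0 ≤ η) (hLη : L * η ≤ 2)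
    (hx : x ∈ S) (hstep : gradStep H G η x ∈ S) (w : M) :
    f (gradStep H G η x) - f w ≤ (1 - μ * η * (2 - L * η)) * (f x - f w) := by
  have hcoeff : 0 ≤ η * (1 - L * η / 2) := mul_nonneg hη (by linarith)
  calc f (gradStep H G η x) - f w
      ≤ f x - η * (1 - L * η / 2) * ‖G x‖ ^ 2 - f w := by
        gcongr
        exact hS.apply_gradStep_le hx hstep
    _ ≤ f x - η * (1 - L * η / 2) * (2 * μ * (f x - f w)) - f w := by
        gcongr
        exact hsc.polyak_lojasiewicz hμ x w
    _ = (1 - μ * η * (2 - L * η)) * (f x - f w) := by ring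

theorem contraction_factor_nonneg (hμL : μ ≤ L) (hη : 0 ≤ η) (hLη : L * η ≤ 2) :
    0 ≤ 1 - μ * η * (2 - L * η) :=
  calc 0 ≤ (1 - L * η) ^ 2 := sq_nonneg _
    _ = 1 - L * η * (2 - L * η) := by ring
    _ ≤ 1 - μ * η * (2 - L * η) := by
      have : 0 ≤ 2 - L * η := by linarith
      gcongr

theorem gradient_descent_strongly_convex_general (hf : HasRGrad H f G)
    (hcont : ∀ (x : M) (v : H.T x), Continuous fun t : ℝ => f (H.exp x (t • v)))
    (hμ : 0 ≤ μ) (hsc : StronglyGConvex H f G μ) (hμL : μ ≤ L) (hη : 0 < η) (hLη : L * η < 2)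
    {Z : ℕ → M} (hS : GSmoothOn H f G L {z | f z ≤ f (Z 0)})
    (hiter : ∀ t, Z (t + 1) = gradStep H G η (Z t)) (w : M) (t : ℕ) :
    f (Z t) ≤ f (Z 0) ∧
      f (Z t) - f w ≤ (1 - μ * η * (2 - L * η)) ^ t * (f (Z 0) - f w) := by
  induction t with
  | zero => simp
  | succ t ih =>
    obtain ⟨hmem, hrate⟩ := ih
    have hcont' : Continuous fun s => f (gradStep H G s (Z t)) := by
      simpa [gradStep] using hcont (Z t) (-G (Z t))
    have hstep : f (gradStep H G η (Z t)) ≤ f (Z 0) :=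
      ((hS.mono fun z hz => le_trans hz hmem).apply_gradStep_le_self hf hcont'.continuousOn
        (hμ.trans hμL) hη hLη).trans hmem
    rw [hiter, pow_succ', mul_assoc]
    exact ⟨hstep, (hS.apply_gradStep_sub_le hsc hμ hη.le hLη.le hmem hstep w).trans
      (mul_le_mul_of_nonneg_left hrate (contraction_factor_nonneg hμL hη.le hLη.le))⟩

end

/-- Theorem: linear convergence of gradient descent for
continuously differentiable, `μ`-strongly `g`-convex `f` with unique minimizer
`z*`. With `D`, `D₀` the sublevel-type sets built from `z₀`, `Gmax` the maximum
of `‖grad f‖` over `D`, and `L₀ ≥ μ` such that `f` is geodesically `L₀`-smooth on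
`D₀` with `‖grad f z‖ ≤ L₀` on `D₀`, the iterates
`z_{t+1} = Exp_{z_t}(−(1/L₀) grad f(z_t))` remain in `D₀` and satisfy
`f(z_t) − f(z*) ≤ (1 − μ/(4L₀))^t (f(z₀) − f(z*))`. -/
theorem gradient_descent_strongly_convex
    {M : Type*} [MetricSpace M] (H : Hadamard M) (f : M → ℝ) (G : (x : M) → H.T x)
    (hf : HasRGrad H f G)
    (hC1 : ∀ (x : M) (v : H.T x), ContDiff ℝ 1 fun t : ℝ => f (H.exp x (t • v)))
    (μ : ℝ) (hμ : 0 < μ) (hsconv : StronglyGConvex H f G μ)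
    (zstar : M) (hmin : ∀ z : M, f zstar ≤ f z)
    (huniq : ∀ z : M, (∀ w : M, f z ≤ f w) → z = zstar)
    (z0 : M) (D D0 : Set M) (Gmax : ℝ)
    (hD : D = {z : M | dist z z0 ≤ Real.sqrt (2 / μ * (f z0 - f zstar))})
    (hGmax : IsGreatest ((fun z => ‖G z‖) '' D) Gmax)
    (hD0 : D0 = {z : M | dist z z0 ≤ Real.sqrt (2 / μ * (f z0 - f zstar)) + 1 / μ * Gmax})
    (L0 : ℝ) (hL0 : μ ≤ L0)
    (hsmooth : ∀ x ∈ D0, ∀ y ∈ D0,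
      f y ≤ f x + ⟪G x, H.log x y⟫ + L0 / 2 * dist x y ^ 2)
    (hgradbound : ∀ z ∈ D0, ‖G z‖ ≤ L0)
    (Z : ℕ → M) (hZ0 : Z 0 = z0)
    (hiter : ∀ t : ℕ, Z (t + 1) = H.exp (Z t) ((-(1 / L0)) • G (Z t))) :
    ∀ t : ℕ, Z t ∈ D0 ∧
      f (Z t) - f zstar ≤ (1 - μ / (4 * L0)) ^ t * (f z0 - f zstar) := by
  subst hD hD0 hZ0
  have hL0pos : 0 < L0 := hμ.trans_le hL0
  have hGmax0 : ‖G (Z 0)‖ ≤ Gmax := hGmax.2 ⟨Z 0, by simp, rfl⟩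
  have hsub : {z | f z ≤ f (Z 0)} ⊆ {z | dist z (Z 0) ≤ √(2 / μ * (f (Z 0) - f zstar)) +
      1 / μ * Gmax} := fun z hz =>
    (hsconv.dist_le_of_le hμ (hf.eq_zero_of_forall_le hmin) hz).trans (by gcongr)
  have hrate : 1 - μ * (1 / L0) * (2 - L0 * (1 / L0)) = 1 - μ / L0 := by field_simp; ring
  have hgap : 0 ≤ f (Z 0) - f zstar := sub_nonneg.2 (hmin _)
  intro t
  obtain ⟨hmem, hle⟩ := gradient_descent_strongly_convex_general hf
    (fun x v => (hC1 x v).continuous) hμ.le hsconv hL0 (one_div_pos.2 hL0pos)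
    (by field_simp; norm_num) (GSmoothOn.mono hsmooth hsub) hiter zstar t
  refine ⟨hsub hmem, hle.trans ?_⟩
  rw [hrate]
  gcongr
  · exact sub_nonneg.2 ((div_le_one hL0pos).2 hL0)
  · linarith
end
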